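/- In the damped model, let μ = (Σ_{k≠1} d_k)/d₁, and let ε, γ satisfy 0 < ε < 1/2 and 0 < γ < ε. Then there exists δ > 0, depending only on μ, ε and γ, such that for every admissible weight function g₂ with L⁻(g₂) ≥ δ and every weight function g₁ (admissible or the constant 1), the map f has a fixed point in Σ_ε = {x ∈ Σ : x₁ ≥ 1 − ε}. -/

import Mathlib

open Set Matrix

/-- An admissible weight function. -/
def IsAdmissible (g g' : ℝ → ℝ) : Prop :=
  (∀ x ∈ Set.Icc (0:ℝ) 1, HasDerivWithinAt g (g' x) (Set.Icc (0:ℝ) 1) x) ∧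
  ContinuousOn g' (Set.Icc (0:ℝ) 1) ∧
  g 0 = 1 ∧
  (∀ x ∈ Set.Icc (0:ℝ) 1, 0 < g x) ∧
  (∀ x ∈ Set.Icc (0:ℝ) 1, 0 < g' x)

/-- A weight function for the damped model: either admissible or the constant `1`. -/
def IsWeight (g g' : ℝ → ℝ) : Prop :=
  (∀ x ∈ Set.Icc (0:ℝ) 1, HasDerivWithinAt g (g' x) (Set.Icc (0:ℝ) 1) x) ∧
  ContinuousOn g' (Set.Icc (0:ℝ) 1) ∧
  g 0 = 1 ∧
  (∀ x ∈ Set.Icc (0:ℝ) 1, 0 < g x) ∧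
  ((∀ x ∈ Set.Icc (0:ℝ) 1, 0 < g' x) ∨
    ((∀ x ∈ Set.Icc (0:ℝ) 1, g x = 1) ∧ ∀ x ∈ Set.Icc (0:ℝ) 1, g' x = 0))

/-- The set of values `g'(x)/g(x)` for `x ∈ [0,1]`; its minimum is `L⁻(g)`. -/
def ratioSet (g g' : ℝ → ℝ) : Set ℝ := (fun x => g' x / g x) '' Set.Icc (0:ℝ) 1

/-- The damped transition matrix. -/
noncomputable def Md {n : ℕ} (C : Matrix (Fin n) (Fin n) ℝ) (d : Fin n → ℝ)
    (γ : ℝ) (g₁ g₂ : ℝ → ℝ) (x : Fin n → ℝ) : Matrix (Fin n) (Fin n) ℝ :=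
  Matrix.of fun i j =>
    γ * (C i j * g₁ (x j) / ∑ k, C i k * g₁ (x k)) +
    (1 - γ) * (d j * g₂ (x j) / ∑ k, d k * g₂ (x k))

/-- The map `f(x) = x · M(x)` of the damped model. -/
noncomputable def fd {n : ℕ} (C : Matrix (Fin n) (Fin n) ℝ) (d : Fin n → ℝ)
    (γ : ℝ) (g₁ g₂ : ℝ → ℝ) (x : Fin n → ℝ) : Fin n → ℝ :=
  Matrix.vecMul x (Md C d γ g₁ g₂ x)

namespace Scarf

set_option linter.unusedSectionVars false

variable {I X : Type*} [Fintype I] [DecidableEq I] [Fintype X] [DecidableEq X]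

/-- Scarf dominance. -/
def Dom (r : I → X → ℕ) (S : Finset X) : Prop := ∀ y, ∃ i, ∀ x ∈ S, r i y ≤ r i x

/-- Being the `a`-maximal point above the corner determined by the other minima. -/
def Top (r : I → X → ℕ) (m : I → X) (a : I) (x : X) : Prop :=
  (∀ k, k ≠ a → r k (m k) < r k x) ∧
    ∀ y, (∀ k, k ≠ a → r k (m k) < r k y) → r a y ≤ r a x

lemma half (r : I → X → ℕ) (τ : Finset X) (hd : Dom r τ) (m : I → X)
    (hm : ∀ i, m i ∈ τ) (hmin : ∀ i, ∀ x ∈ τ, r i (m i) ≤ r i x)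
    (hsurj : ∀ x ∈ τ, ∃ i, m i = x) (a b : I) (hab : a ≠ b) (hmab : m a = m b)
    (x : X) (hx : Top r m a x) :
    x ∉ τ ∧ Dom r (insert x τ) ∧ r a x ≤ r a (m a) := by
  obtain ⟨h1, h2⟩ := hx
  have key : ∀ y, (∀ k, k ≠ a → r k (m k) < r k y) → ∀ z ∈ τ, r a y ≤ r a z := by
    intro y hy
    obtain ⟨i, hi⟩ := hd y
    by_cases hia : i = a
    · subst hia; exact hi
    · exact absurd (hi _ (hm i)) (not_le.2 (hy i hia))
  refine ⟨?_, ?_, key x h1 _ (hm a)⟩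
  · intro hxt
    obtain ⟨i, hi⟩ := hsurj x hxt
    by_cases hia : i = a
    · have := h1 b hab.symm
      rw [← hmab, ← hia, hi] at this
      exact lt_irrefl _ this
    · have := h1 i hia
      rw [hi] at this
      exact lt_irrefl _ this
  · intro y
    by_cases hy : ∀ k, k ≠ a → r k (m k) < r k y
    · refine ⟨a, fun z hz => ?_⟩
      rcases Finset.mem_insert.1 hz with rfl | hz
      · exact h2 y hy
      · exact key y hy z hz
    · push Not at hy
      obtain ⟨k, hka, hk⟩ := hy
      refine ⟨k, fun z hz => ?_⟩
      rcases Finset.mem_insert.1 hz with rfl | hz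
      · exact hk.trans (h1 k hka).le
      · exact hk.trans (hmin k z hz)

lemma door_two (r : I → X → ℕ) (s : I → X) (hr : ∀ i, Function.Injective (r i))
    (hs : Function.Injective s) (h0 : ∀ i x, r i (s i) ≤ r i x)
    (h1 : ∀ i j x, j ≠ i → x ∉ Set.range s → r i x < r i (s j))
    (τ : Finset X) (hd : Dom r τ) (hc : τ.card + 1 = Fintype.card I)
    (hex : ∀ i, ∃ x ∈ τ, ∀ j, j ≠ i → s j ≠ x) (hne : τ.Nonempty)  :
    ∃ x y : X, x ≠ y ∧ ∀ z, (z ∉ τ ∧ Dom r (insert z τ)) ↔ z = x ∨ z = y := by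
  classical
  have hmex : ∀ i, ∃ x ∈ τ, ∀ y ∈ τ, r i x ≤ r i y := fun i =>
    Finset.exists_min_image τ (r i) hne
  choose m hm hmin using hmex
  have hsurj : ∀ x ∈ τ, ∃ i, m i = x := by
    intro x hx
    obtain ⟨i, hi⟩ := hd x
    exact ⟨i, hr i (le_antisymm (hmin i x hx) (hi _ (hm i)))⟩
  obtain ⟨a, -, b, -, hab, hmab⟩ := Finset.exists_ne_map_eq_of_card_lt_of_maps_to
    (s := (Finset.univ : Finset I)) (t := τ) (f := m)
    (by rw [Finset.card_univ]; omega) (fun i _ => hm i)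
  have hTop : ∀ a, ∃ x, Top r m a x := by
    intro a
    have hn : (Finset.univ.filter fun y => ∀ k, k ≠ a → r k (m k) < r k y).Nonempty := by
      refine ⟨s a, ?_⟩
      simp only [Finset.mem_filter, Finset.mem_univ, true_and]
      intro k hka
      by_cases hk : m k ∈ Set.range s
      · obtain ⟨j, hj⟩ := hk
        by_cases hjk : j = k
        · subst hjk
          rw [← hj]
          exact lt_of_le_of_ne (h0 j _) (fun h => hka (hs (hr j h)))
        · exfalso
          obtain ⟨x, hx, hxs⟩ := hex k
          have hle := hmin k x hx
          rw [← hj] at hle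
          by_cases hxr : x ∈ Set.range s
          · obtain ⟨l, hl⟩ := hxr
            by_cases hlk : l = k
            · subst hlk
              rw [← hl] at hle
              exact hjk (hs (hr l (le_antisymm hle (h0 l _))))
            · exact hxs l hlk hl
          · exact absurd (h1 k j x hjk hxr) (not_lt.2 hle)
      · exact h1 k a _ hka.symm hk
    obtain ⟨x, hx, hx2⟩ := Finset.exists_max_image _ (r a) hn
    simp only [Finset.mem_filter, Finset.mem_univ, true_and] at hx hx2
    exact ⟨x, hx, hx2⟩
  obtain ⟨x, hx⟩ := hTop a
  obtain ⟨y, hy⟩ := hTop b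
  have hx' := half r τ hd m hm hmin hsurj a b hab hmab x hx
  have hy' := half r τ hd m hm hmin hsurj b a hab.symm hmab.symm y hy
  refine ⟨x, y, ?_, ?_⟩
  · rintro rfl
    exact absurd (hx.1 b hab.symm) (not_lt.2 hy'.2.2)
  intro z
  constructor
  · rintro ⟨hz, hzd⟩
    have hch : ∀ w : (insert z τ : Finset X), ∃ i, ∀ v ∈ insert z τ, r i w ≤ r i v :=
      fun w => hzd w
    choose ι hι using hch
    have hinj : Function.Injective ι := by
      intro w w' h
      apply Subtype.ext
      apply hr (ι w)
      apply le_antisymm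
      · exact hι w w' w'.2
      · rw [h]; exact hι w' w w.2
    have hbij : Function.Bijective ι := by
      rw [Fintype.bijective_iff_injective_and_card]
      refine ⟨hinj, ?_⟩
      rw [Fintype.card_coe, Finset.card_insert_of_notMem hz, hc]
    have hzm : z ∈ insert z τ := Finset.mem_insert_self _ _
    have hk : ∀ k, k ≠ ι ⟨z, hzm⟩ → ι ⟨m k, Finset.mem_insert_of_mem (hm k)⟩ = k := by
      intro k hk
      obtain ⟨⟨w, hw⟩, hwk⟩ := hbij.2 k
      have hwz : w ≠ z := by rintro rfl; exact hk hwk.symm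
      have hwt : w ∈ τ := (Finset.mem_insert.1 hw).resolve_left hwz
      have : w = m k := by
        apply hr k
        refine le_antisymm ?_ (hmin k w hwt)
        have := hι ⟨w, hw⟩ (m k) (Finset.mem_insert_of_mem (hm k))
        rwa [hwk] at this
      subst this
      exact hwk
    have hM : ∀ k, k ≠ ι ⟨z, hzm⟩ → r k (m k) < r k z := by
      intro k hk'
      have := hι ⟨m k, Finset.mem_insert_of_mem (hm k)⟩ z hzm
      rw [hk k hk'] at this
      refine lt_of_le_of_ne this fun h => hz ?_
      rw [← hr k h]; exact hm k
    have hT : Top r m (ι ⟨z, hzm⟩) z := by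
      refine ⟨hM, fun y hy => ?_⟩
      obtain ⟨i, hi⟩ := hzd y
      by_cases hii : i = ι ⟨z, hzm⟩
      · rw [← hii]; exact hi z hzm
      · exact absurd (hi _ (Finset.mem_insert_of_mem (hm i))) (not_le.2 (hy i hii))
    have huniq : ∀ e u v, Top r m e u → Top r m e v → u = v := fun e u v hu hv =>
      hr e (le_antisymm (hv.2 u hu.1) (hu.2 v hv.1))
    by_cases ha : ι ⟨z, hzm⟩ = a
    · left; rw [ha] at hT; exact huniq _ _ _ hT hx
    by_cases hb : ι ⟨z, hzm⟩ = b
    · right; rw [hb] at hT; exact huniq _ _ _ hT hy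
    exfalso
    have e1 := hk a (Ne.symm ha)
    have e2 := hk b (Ne.symm hb)
    apply hab
    rw [← e1, ← e2]
    simp only [hmab]
  · rintro (rfl | rfl)
    · exact ⟨hx'.1, hx'.2.1⟩
    · exact ⟨hy'.1, hy'.2.1⟩

lemma door_one (r : I → X → ℕ) (s : I → X) (hr : ∀ i, Function.Injective (r i))
    (h0 : ∀ i x, r i (s i) ≤ r i x)
    (h1 : ∀ i j x, j ≠ i → x ∉ Set.range s → r i x < r i (s j))
    (hT : ∃ x, x ∉ Set.range s) (i₀ : I) :
    ∃ x : X, ∀ z, (z ∉ (Finset.univ.erase i₀).image s ∧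
      Dom r (insert z ((Finset.univ.erase i₀).image s))) ↔ z = x := by
  classical
  have hn : (Finset.univ.filter fun y => y ∉ Set.range s).Nonempty := by
    obtain ⟨x, hx⟩ := hT
    exact ⟨x, by simpa using hx⟩
  obtain ⟨x, hx, hx2⟩ := Finset.exists_max_image _ (r i₀) hn
  simp only [Finset.mem_filter, Finset.mem_univ, true_and] at hx hx2
  refine ⟨x, fun z => ⟨?_, ?_⟩⟩
  · rintro ⟨hz, hzd⟩
    have main : ∀ y, y ∉ Set.range s → r i₀ y ≤ r i₀ z := by
      intro y hy
      obtain ⟨i, hi⟩ := hzd y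
      by_cases hii : i = i₀
      · rw [← hii]; exact hi _ (Finset.mem_insert_self _ _)
      · exfalso
        have := hi (s i) (Finset.mem_insert_of_mem (Finset.mem_image_of_mem _ (by simp [hii])))
        exact hy ⟨i, hr i (le_antisymm (h0 i y) this)⟩
    have hzr : z ∉ Set.range s := by
      rintro ⟨j, rfl⟩
      by_cases hj : j = i₀
      · subst hj
        have := main x hx
        exact hx ⟨j, hr j (le_antisymm (h0 j x) this)⟩
      · exact hz (Finset.mem_image_of_mem _ (by simp [hj]))
    exact hr i₀ (le_antisymm (hx2 z hzr) (main x hx))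
  · rintro rfl
    refine ⟨?_, ?_⟩
    · intro h
      obtain ⟨j, -, hj⟩ := Finset.mem_image.1 h
      exact hx ⟨j, hj⟩
    · intro y
      by_cases hy : y ∈ Set.range s
      · obtain ⟨j, rfl⟩ := hy
        exact ⟨j, fun x _ => h0 j x⟩
      · refine ⟨i₀, fun w hw => ?_⟩
        rcases Finset.mem_insert.1 hw with rfl | hw
        · exact hx2 y hy
        · obtain ⟨j, hj, rfl⟩ := Finset.mem_image.1 hw
          exact (h1 i₀ j y (by simpa using hj) hy).le

lemma room_even (c : X → I) (i₀ : I) (S : Finset X) (hS : S.card = Fintype.card I)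
    (hnc : S.image c ≠ Finset.univ) :
    Even (S.filter fun x => (S.erase x).image c = Finset.univ.erase i₀).card := by
  classical
  by_cases hE : (S.filter fun x => (S.erase x).image c = Finset.univ.erase i₀) = ∅
  · rw [hE]; simp
  obtain ⟨x, hx⟩ := Finset.nonempty_iff_ne_empty.2 hE
  obtain ⟨hxS, hxi⟩ := Finset.mem_filter.1 hx
  have hmem : ∀ k, k ≠ i₀ → ∃ z ∈ S, z ≠ x ∧ c z = k := by
    intro k hk
    have : k ∈ (S.erase x).image c := by rw [hxi]; simp [hk]
    obtain ⟨z, hz, hzk⟩ := Finset.mem_image.1 this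
    exact ⟨z, Finset.mem_of_mem_erase hz, Finset.ne_of_mem_erase hz, hzk⟩
  have hcne : ∀ z ∈ S, z ≠ x → c z ≠ i₀ := by
    intro z hz hzx
    have : c z ∈ (S.erase x).image c :=
      Finset.mem_image_of_mem _ (Finset.mem_erase.2 ⟨hzx, hz⟩)
    rw [hxi] at this
    exact Finset.ne_of_mem_erase this
  have hinj : Set.InjOn c (S.erase x) := by
    apply Finset.injOn_of_card_image_eq
    rw [hxi, Finset.card_erase_of_mem (Finset.mem_univ _), Finset.card_erase_of_mem hxS, hS,
      Finset.card_univ]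
  have hinj' : ∀ z ∈ S, z ≠ x → ∀ w ∈ S, w ≠ x → c z = c w → z = w := by
    intro z hz hzx w hw hwx h
    exact hinj (by simp [hz, hzx]) (by simp [hw, hwx]) h
  have hcx : c x ≠ i₀ := by
    intro h
    apply hnc
    rw [Finset.eq_univ_iff_forall]
    intro k
    by_cases hk : k = i₀
    · rw [hk, ← h]; exact Finset.mem_image_of_mem _ hxS
    · obtain ⟨z, hz, -, hzk⟩ := hmem k hk
      rw [← hzk]; exact Finset.mem_image_of_mem _ hz
  obtain ⟨x', hx'S, hx'x, hcx'⟩ := hmem (c x) hcx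
  have : (S.filter fun x => (S.erase x).image c = Finset.univ.erase i₀) = {x, x'} := by
    ext y
    simp only [Finset.mem_filter, Finset.mem_insert, Finset.mem_singleton]
    constructor
    · rintro ⟨hyS, hy⟩
      by_contra hcon
      push Not at hcon
      have : c y ∈ (S.erase y).image c := by
        rw [hy]; simp [hcne y hyS hcon.1]
      obtain ⟨w, hw, hwy⟩ := Finset.mem_image.1 this
      have hwS := Finset.mem_of_mem_erase hw
      have hwne := Finset.ne_of_mem_erase hw
      by_cases hwx : w = x
      · subst hwx
        exact hcon.2 (hinj' y hyS hcon.1 x' hx'S hx'x (by rw [hcx', hwy]))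
      · exact hwne (hinj' w hwS hwx y hyS hcon.1 hwy)
    · rintro (rfl | rfl)
      · exact ⟨hxS, hxi⟩
      · refine ⟨hx'S, ?_⟩
        ext k
        simp only [Finset.mem_image, Finset.mem_erase, Finset.mem_univ, and_true]
        constructor
        · rintro ⟨z, ⟨-, hz⟩, rfl⟩
          by_cases hzx : z = x
          · rw [hzx]; exact hcx
          · exact hcne z hz hzx
        · intro hk
          obtain ⟨z, hz, hzx, hzk⟩ := hmem k hk
          by_cases hzy : z = y
          · exact ⟨x, ⟨hx'x.symm, hxS⟩, by rw [← hcx', ← hzy, hzk]⟩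
          · exact ⟨z, ⟨hzy, hz⟩, hzk⟩
  rw [this, Finset.card_pair hx'x.symm]
  exact even_two

theorem scarf [Nonempty I] (r : I → X → ℕ) (s : I → X) (hr : ∀ i, Function.Injective (r i))
    (hs : Function.Injective s) (h0 : ∀ i x, r i (s i) ≤ r i x)
    (h1 : ∀ i j x, j ≠ i → x ∉ Set.range s → r i x < r i (s j))
    (hT : ∃ x, x ∉ Set.range s) (c : X → I) (hc : ∀ i, c (s i) = i) :
    ∃ S : Finset X, Dom r S ∧ S.image c = Finset.univ := by
  classical
  by_contra hno
  push Not at hno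
  obtain ⟨i₀⟩ := ‹Nonempty I›
  let R : Finset (Finset X) := Finset.univ.filter fun S => S.card = Fintype.card I ∧ Dom r S
  let D : Finset (Finset X) := Finset.univ.filter fun τ =>
    τ.card + 1 = Fintype.card I ∧ Dom r τ ∧ τ.image c = Finset.univ.erase i₀
  have hdc := Finset.sum_card_bipartiteAbove_eq_sum_card_bipartiteBelow
    (s := D) (t := R) (fun τ S => τ ⊆ S)
  have hpos : 0 < Fintype.card I := Fintype.card_pos_iff.2 ⟨i₀⟩
  have hmono : ∀ S τ : Finset X, τ ⊆ S → Dom r S → Dom r τ := by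
    intro S τ h hS y
    obtain ⟨i, hi⟩ := hS y
    exact ⟨i, fun x hx => hi x (h hx)⟩
  -- rooms
  have hroom : Even (∑ S ∈ R, (Finset.bipartiteBelow (fun τ S => τ ⊆ S) D S).card) := by
    apply Finset.even_sum
    intro S hS
    obtain ⟨-, hScard, hSD⟩ := Finset.mem_filter.1 hS
    have := room_even c i₀ S hScard (hno S hSD)
    suffices h : (S.filter fun x => (S.erase x).image c = Finset.univ.erase i₀).card =
        (Finset.bipartiteBelow (fun τ S => τ ⊆ S) D S).card by
      rw [← h]; exact this
    apply Finset.card_bij (fun x _ => S.erase x)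
    · intro x hx
      obtain ⟨hxS, hx⟩ := Finset.mem_filter.1 hx
      simp only [Finset.bipartiteBelow, D, Finset.mem_filter, Finset.mem_univ, true_and]
      refine ⟨⟨?_, hmono _ _ (Finset.erase_subset _ _) hSD, hx⟩, Finset.erase_subset _ _⟩
      rw [Finset.card_erase_add_one hxS, hScard]
    · intro x hx y hy h
      exact (Finset.erase_injOn S) (Finset.mem_filter.1 hx).1 (Finset.mem_filter.1 hy).1 h
    · intro τ hτ
      simp only [Finset.bipartiteBelow, D, Finset.mem_filter, Finset.mem_univ, true_and] at hτ
      obtain ⟨⟨h1, h2, h3⟩, h4⟩ := hτ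
      obtain ⟨x, hx, hxe⟩ := Finset.exists_eq_insert_iff.2 ⟨h4, by rw [h1, hScard]⟩
      have he : S.erase x = τ := by rw [← hxe, Finset.erase_insert hx]
      refine ⟨x, ?_, he⟩
      rw [Finset.mem_filter, he]
      exact ⟨by rw [← hxe]; exact Finset.mem_insert_self _ _, h3⟩
  have hfib : ∀ τ ∈ D, (Finset.bipartiteAbove (fun τ S => τ ⊆ S) R τ).card =
      (Finset.univ.filter fun z => z ∉ τ ∧ Dom r (insert z τ)).card := by
    intro τ hτ
    obtain ⟨-, hτc, hτD, hτi⟩ := Finset.mem_filter.1 hτ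
    symm
    apply Finset.card_bij (fun x _ => insert x τ)
    · intro x hx
      obtain ⟨-, hx, hxd⟩ := Finset.mem_filter.1 hx
      simp only [Finset.bipartiteAbove, R, Finset.mem_filter, Finset.mem_univ, true_and]
      refine ⟨⟨?_, hxd⟩, Finset.subset_insert _ _⟩
      rw [Finset.card_insert_of_notMem hx, hτc]
    · intro x hx y hy h
      obtain ⟨-, hx, hxd⟩ := Finset.mem_filter.1 hx
      have : x ∈ insert y τ := by rw [← h]; exact Finset.mem_insert_self _ _
      exact (Finset.mem_insert.1 this).resolve_right hx
    · intro S hS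
      simp only [Finset.bipartiteAbove, R, Finset.mem_filter, Finset.mem_univ, true_and] at hS
      obtain ⟨⟨h1, h2⟩, h4⟩ := hS
      obtain ⟨x, hx, hxe⟩ := Finset.exists_eq_insert_iff.2 ⟨h4, by rw [h1, hτc]⟩
      refine ⟨x, ?_, hxe⟩
      rw [Finset.mem_filter, hxe]
      exact ⟨Finset.mem_univ _, hx, h2⟩
  set τ₀ : Finset X := (Finset.univ.erase i₀).image s with hτ₀
  obtain ⟨x₀, hx₀⟩ := door_one r s hr h0 h1 hT i₀
  have hτ₀c : τ₀.card + 1 = Fintype.card I := by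
    rw [hτ₀, Finset.card_image_of_injective _ hs, Finset.card_erase_add_one (Finset.mem_univ _),
      Finset.card_univ]
  have hτ₀D : τ₀ ∈ D := by
    simp only [D, Finset.mem_filter, Finset.mem_univ, true_and]
    refine ⟨hτ₀c, hmono _ _ (Finset.subset_insert _ _) ((hx₀ x₀).2 rfl).2, ?_⟩
    rw [hτ₀, Finset.image_image]
    have : c ∘ s = id := funext hc
    rw [this, Finset.image_id]
  have hone : (Finset.bipartiteAbove (fun τ S => τ ⊆ S) R τ₀).card = 1 := by
    rw [hfib _ hτ₀D, Finset.card_eq_one]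
    refine ⟨x₀, ?_⟩
    ext z
    rw [Finset.mem_filter, Finset.mem_singleton, hx₀ z]
    simp
  have hrest : Even (∑ τ ∈ D.erase τ₀, (Finset.bipartiteAbove (fun τ S => τ ⊆ S) R τ).card) := by
    apply Finset.even_sum
    intro τ hτ
    have hτD := Finset.mem_of_mem_erase hτ
    have hτne := Finset.ne_of_mem_erase hτ
    rw [hfib _ hτD]
    obtain ⟨-, hτc, hτd, hτi⟩ := Finset.mem_filter.1 hτD
    have hex : ∀ i, ∃ x ∈ τ, ∀ j, j ≠ i → s j ≠ x := by
      intro i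
      by_contra hcon
      push Not at hcon
      have hsub : τ ⊆ (Finset.univ.erase i).image s := by
        intro x hx
        obtain ⟨j, hj, hjx⟩ := hcon x hx
        exact Finset.mem_image.2 ⟨j, by simp [hj], hjx⟩
      have heq : τ = (Finset.univ.erase i).image s := by
        apply Finset.eq_of_subset_of_card_le hsub
        rw [Finset.card_image_of_injective _ hs, Finset.card_erase_of_mem (Finset.mem_univ _),
          Finset.card_univ]
        omega
      have : i = i₀ := by
        rw [heq, Finset.image_image, show c ∘ s = id from funext hc, Finset.image_id] at hτi
        by_contra hii
        have : i ∈ Finset.univ.erase i₀ := by simp [hii]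
        rw [← hτi] at this
        simp at this
      rw [this] at heq
      exact hτne heq
    obtain ⟨w, hw, -⟩ := hex i₀
    obtain ⟨x, y, hxy, hz⟩ := door_two r s hr hs h0 h1 τ hτd hτc hex ⟨w, hw⟩
    have : (Finset.univ.filter fun z => z ∉ τ ∧ Dom r (insert z τ)) = {x, y} := by
      ext z
      rw [Finset.mem_filter, hz z]
      simp
    rw [this, Finset.card_pair hxy]
    exact even_two
  rw [← hdc, ← Finset.add_sum_erase _ _ hτ₀D, hone] at hroom
  rw [Nat.even_add] at hroom
  exact absurd (hroom.2 hrest) (by decide)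


/-- Integer grid points of the simplex. -/
def Grid (N m : ℕ) : Type := {x : Fin N → Fin (m + 1) // ∑ i, (x i : ℕ) = m}

instance gridFintype (N m : ℕ) : Fintype (Grid N m) := by
  unfold Grid; infer_instance

instance gridDecEq (N m : ℕ) : DecidableEq (Grid N m) := by
  unfold Grid; infer_instance

/-- Coordinates of a grid point. -/
def Grid.co {N m : ℕ} (x : Grid N m) (i : Fin N) : ℕ := (x.1 i : ℕ)

lemma Grid.co_sum {N m : ℕ} (x : Grid N m) : ∑ i, x.co i = m := x.2

lemma Grid.co_le {N m : ℕ} (x : Grid N m) (i : Fin N) : x.co i ≤ m :=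
  Nat.lt_succ_iff.1 (x.1 i).2

lemma Grid.exists_of {N m : ℕ} (y : Fin N → ℕ) (h : ∑ i, y i = m) :
    ∃ x : Grid N m, ∀ i, x.co i = y i := by
  have hle : ∀ i, y i < m + 1 := by
    intro i
    have := Finset.single_le_sum (f := y) (fun j _ => Nat.zero_le _) (Finset.mem_univ i)
    omega
  exact ⟨⟨fun i => ⟨y i, hle i⟩, h⟩, fun i => rfl⟩

/-- Rank functions for the grid with slack points. -/
noncomputable def rk (N m : ℕ) (i : Fin N) : Grid N m ⊕ Fin N → ℕ
  | Sum.inl x => 1 + (Fintype.equivFin (Grid N m) x : ℕ) + Fintype.card (Grid N m) * x.co i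
  | Sum.inr j => if j = i then 0 else 1 + Fintype.card (Grid N m) * (m + 1) + j

lemma mixed {K a b u v : ℕ} (hu : u < K) (h : 1 + u + K * a ≤ 1 + v + K * b) (hv : v < K) :
    a ≤ b := by
  by_contra hcon
  have : b + 1 ≤ a := by omega
  have := Nat.mul_le_mul_left K this
  rw [Nat.mul_add] at this
  omega

lemma rk_lt (N m : ℕ) (i : Fin N) (x : Grid N m) :
    rk N m i (Sum.inl x) < 1 + Fintype.card (Grid N m) * (m + 1) := by
  simp only [rk]
  have h1 := (Fintype.equivFin (Grid N m) x).2
  have h2 := Nat.mul_le_mul_left (Fintype.card (Grid N m)) (x.co_le i)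
  rw [Nat.mul_add]
  omega

lemma rk_inj (N m : ℕ) (i : Fin N) : Function.Injective (rk N m i) := by
  rintro (x | j) (y | k) h
  · simp only [rk] at h
    have hx := (Fintype.equivFin (Grid N m) x).2
    have hy := (Fintype.equivFin (Grid N m) y).2
    have e : x.co i = y.co i := le_antisymm (mixed hx h.le hy) (mixed hy h.ge hx)
    rw [e] at h
    congr 1
    apply (Fintype.equivFin (Grid N m)).injective
    apply Fin.ext
    omega
  · exfalso
    have := rk_lt N m i x
    rw [h] at this
    simp only [rk] at h this
    split_ifs at h this <;> omega
  · exfalso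
    have := rk_lt N m i y
    rw [← h] at this
    simp only [rk] at h this
    split_ifs at h this <;> omega
  · simp only [rk] at h
    congr 1
    split_ifs at h with h1 h2 h2
    · rw [h1, h2]
    · omega
    · omega
    · apply Fin.ext; omega

theorem grid_lemma (N m : ℕ) (hN : 0 < N) (c : Grid N m → Fin N) :
    ∃ p : Grid N m, ∀ i, p.co i ≤ N ∨
      ∃ x : Grid N m, c x = i ∧ ∀ j, x.co j ≤ p.co j + N ∧ p.co j ≤ x.co j + N := by
  classical
  have : Nonempty (Fin N) := ⟨⟨0, hN⟩⟩
  have hgne : ∃ x : Grid N m, True := by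
    obtain ⟨x, -⟩ := Grid.exists_of (N := N) (m := m) (fun i => if i = ⟨0, hN⟩ then m else 0)
      (by simp)
    exact ⟨x, trivial⟩
  obtain ⟨x₀, -⟩ := hgne
  obtain ⟨S, hS, hcol⟩ := scarf (rk N m) (fun i => (Sum.inr i : Grid N m ⊕ Fin N))
    (rk_inj N m) Sum.inr_injective (by intro i x; simp [rk])
    (by
      rintro i j (x | k) hji hx
      · have := rk_lt N m i x
        simp only [rk, if_neg hji] at this ⊢
        omega
      · exact absurd ⟨k, rfl⟩ hx)
    ⟨Sum.inl x₀, by simp⟩ (Sum.elim c id) (by intro i; rfl)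
  let Cs : Finset (Fin N) := Finset.univ.filter fun i => (Sum.inr i : Grid N m ⊕ Fin N) ∉ S
  have hdom : ∀ y : Grid N m, ∃ i ∈ Cs, ∀ x : Grid N m, Sum.inl x ∈ S → y.co i ≤ x.co i := by
    intro y
    obtain ⟨i, hi⟩ := hS (Sum.inl y)
    refine ⟨i, ?_, ?_⟩
    · simp only [Cs, Finset.mem_filter, Finset.mem_univ, true_and]
      intro h
      have := hi _ h
      simp [rk] at this
    · intro x hx
      have := hi _ hx
      simp only [rk] at this
      exact mixed (Fintype.equivFin (Grid N m) y).2 this (Fintype.equivFin (Grid N m) x).2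
  have hcl : ∀ i ∈ Cs, ∃ x : Grid N m, Sum.inl x ∈ S ∧ c x = i := by
    intro i hi
    have : i ∈ S.image (Sum.elim c id) := by rw [hcol]; exact Finset.mem_univ _
    obtain ⟨z, hz, hzi⟩ := Finset.mem_image.1 this
    rcases z with x | k
    · exact ⟨x, hz, hzi⟩
    · exfalso
      simp only [Sum.elim_inr, id] at hzi
      subst hzi
      exact (Finset.mem_filter.1 hi).2 hz
  obtain ⟨i₁, hi₁, -⟩ := hdom x₀
  obtain ⟨p, hp, -⟩ := hcl i₁ hi₁
  have hb : ∀ i, ∃ b : ℕ, (∀ x : Grid N m, Sum.inl x ∈ S → b ≤ x.co i) ∧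
      ∃ x : Grid N m, Sum.inl x ∈ S ∧ x.co i = b := by
    intro i
    obtain ⟨x, hx, hx2⟩ := Finset.exists_min_image
      (Finset.univ.filter fun x : Grid N m => (Sum.inl x : Grid N m ⊕ Fin N) ∈ S)
      (fun x => x.co i) ⟨p, by simpa using hp⟩
    simp only [Finset.mem_filter, Finset.mem_univ, true_and] at hx hx2
    exact ⟨x.co i, hx2, x, hx, rfl⟩
  choose b hb1 hb2 using hb
  have hsum : m < ∑ i ∈ Cs, (b i + 1) := by
    by_contra hcon
    push Not at hcon
    obtain ⟨y, hy⟩ := Grid.exists_of (N := N) (m := m)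
      (fun i => (if i ∈ Cs then b i + 1 else 0) +
        if i = i₁ then m - ∑ i ∈ Cs, (b i + 1) else 0) (by
        rw [Finset.sum_add_distrib, Finset.sum_ite_mem, Finset.univ_inter]
        simp only [Finset.sum_ite_eq', Finset.mem_univ, if_true]
        omega)
    obtain ⟨i, hi, hi2⟩ := hdom y
    obtain ⟨x, hx, hxb⟩ := hb2 i
    have := hi2 x hx
    rw [hy i, if_pos hi] at this
    omega
  have hcard : Cs.card ≤ N := by
    have := Finset.card_le_univ Cs
    simpa using this
  rw [Finset.sum_add_distrib, Finset.sum_const, smul_eq_mul, mul_one] at hsum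
  have hbound : ∀ x : Grid N m, Sum.inl x ∈ S → ∀ j,
      (j ∈ Cs → x.co j ≤ b j + N) ∧ (j ∉ Cs → x.co j ≤ N) := by
    intro x hx j
    have hxs := x.co_sum
    constructor
    · intro hj
      have e1 : ∑ i ∈ Cs, x.co i ≤ m := by
        exact (Finset.sum_le_sum_of_subset (Finset.subset_univ _)).trans hxs.le
      rw [← Finset.add_sum_erase _ _ hj] at e1 hsum
      have : ∑ i ∈ Cs.erase j, b i ≤ ∑ i ∈ Cs.erase j, x.co i :=
        Finset.sum_le_sum fun i _ => hb1 i x hx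
      omega
    · intro hj
      have e1 : ∑ i ∈ insert j Cs, x.co i ≤ m := by
        exact (Finset.sum_le_sum_of_subset (Finset.subset_univ _)).trans hxs.le
      rw [Finset.sum_insert hj] at e1
      have : ∑ i ∈ Cs, b i ≤ ∑ i ∈ Cs, x.co i :=
        Finset.sum_le_sum fun i _ => hb1 i x hx
      omega
  refine ⟨p, fun i => ?_⟩
  by_cases hi : i ∈ Cs
  · right
    obtain ⟨x, hx, hxi⟩ := hcl i hi
    refine ⟨x, hxi, fun j => ?_⟩
    have h1 := hbound x hx j
    have h2 := hbound p hp j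
    have h3 := hb1 j x hx
    have h4 := hb1 j p hp
    by_cases hj : j ∈ Cs
    · have := h1.1 hj; have := h2.1 hj; omega
    · have := h1.2 hj; have := h2.2 hj; omega
  · left
    exact (hbound p hp i).2 hi

/-- Brouwer's fixed point theorem on the standard simplex. -/
theorem brouwer_simplex (N : ℕ) (hN : 0 < N) (F : (Fin N → ℝ) → (Fin N → ℝ))
    (hF : ContinuousOn F (stdSimplex ℝ (Fin N)))
    (hmaps : ∀ x ∈ stdSimplex ℝ (Fin N), F x ∈ stdSimplex ℝ (Fin N)) :
    ∃ x ∈ stdSimplex ℝ (Fin N), F x = x := by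
  classical
  have hcomp : IsCompact (stdSimplex ℝ (Fin N)) := isCompact_stdSimplex ℝ (Fin N)
  have hne : (stdSimplex ℝ (Fin N)).Nonempty := ⟨_, single_mem_stdSimplex ℝ ⟨0, hN⟩⟩
  have happrox : ∀ η : ℝ, 0 < η → ∃ p ∈ stdSimplex ℝ (Fin N), ∀ i, p i ≤ F p i + η := by
    intro η hη
    have huc := hcomp.uniformContinuousOn_of_continuous hF
    rw [Metric.uniformContinuousOn_iff] at huc
    obtain ⟨δ, hδ, hδ2⟩ := huc (η / 2) (by positivity)
    obtain ⟨m, hm⟩ := exists_nat_gt ((N : ℝ) / min δ (η / 2))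
    have hmin : 0 < min δ (η / 2) := lt_min hδ (by positivity)
    have hNpos : (0 : ℝ) < N := by exact_mod_cast hN
    have hmpos : (0 : ℝ) < m := lt_trans (by positivity) hm
    have hsmall : (N : ℝ) / m < min δ (η / 2) := by
      rw [div_lt_iff₀ hmin] at hm
      rw [div_lt_iff₀ hmpos]
      linarith [mul_comm (m : ℝ) (min δ (η / 2))]
    have hsδ := hsmall.trans_le (min_le_left _ _)
    have hsη := hsmall.trans_le (min_le_right _ _)
    let q : Grid N m → Fin N → ℝ := fun x i => (x.co i : ℝ) / m
    have hq : ∀ x, q x ∈ stdSimplex ℝ (Fin N) := by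
      intro x
      refine ⟨fun i => by positivity, ?_⟩
      simp only [q]
      rw [← Finset.sum_div, ← Nat.cast_sum, x.co_sum]
      exact div_self hmpos.ne'
    have hcol : ∀ x : Grid N m, ∃ i, q x i ≤ F (q x) i := by
      intro x
      by_contra hcon
      push Not at hcon
      have h1 := (hq x).2
      have h2 := (hmaps _ (hq x)).2
      have : ∑ i, F (q x) i < ∑ i, q x i :=
        Finset.sum_lt_sum_of_nonempty ⟨⟨0, hN⟩, Finset.mem_univ _⟩ fun i _ => hcon i
      linarith
    choose c hc using hcol
    obtain ⟨p, hp⟩ := grid_lemma N m hN c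
    refine ⟨q p, hq p, fun i => ?_⟩
    rcases hp i with h | ⟨x, hxi, hx⟩
    · have h1 : q p i ≤ N / m := by
        simp only [q]
        have : (p.co i : ℝ) ≤ N := by exact_mod_cast h
        gcongr
      have h2 := (hmaps _ (hq p)).1 i
      linarith
    · have hd : ∀ j, |q x j - q p j| ≤ N / m := by
        intro j
        have h1 : (x.co j : ℝ) ≤ p.co j + N := by exact_mod_cast (hx j).1
        have h2 : (p.co j : ℝ) ≤ x.co j + N := by exact_mod_cast (hx j).2
        simp only [q]
        rw [← sub_div, abs_div, abs_of_pos hmpos]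
        gcongr
        rw [abs_le]
        constructor <;> linarith
      have hdist : dist (q x) (q p) < δ := by
        rw [dist_pi_lt_iff hδ]
        intro j
        rw [Real.dist_eq]
        exact (hd j).trans_lt hsδ
      have h3 := hδ2 _ (hq x) _ (hq p) hdist
      rw [dist_pi_lt_iff (by positivity)] at h3
      have h4 := abs_lt.1 (h3 i)
      have h5 := hc x
      rw [hxi] at h5
      have h6 := abs_le.1 (hd i)
      linarith [h4.1, h4.2, h6.1, h6.2]
  have hcont : ContinuousOn (fun x => ∑ i, max 0 (x i - F x i)) (stdSimplex ℝ (Fin N)) := by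
    apply continuousOn_finsetSum
    intro i _
    have h1 : ContinuousOn (fun x => F x i) (stdSimplex ℝ (Fin N)) :=
      (continuous_apply i).comp_continuousOn hF
    have h2 : ContinuousOn (fun x : Fin N → ℝ => x i) (stdSimplex ℝ (Fin N)) :=
      (continuous_apply i).continuousOn
    exact continuousOn_const.sup (h2.sub h1)
  obtain ⟨x, hx, hxmin⟩ := hcomp.exists_isMinOn hne hcont
  have hle : ∑ i, max 0 (x i - F x i) ≤ 0 := by
    apply le_of_forall_pos_le_add
    intro η hη
    have hNpos : (0 : ℝ) < N := by exact_mod_cast hN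
    obtain ⟨p, hp, hp2⟩ := happrox (η / N) (by positivity)
    have h1 : ∑ i, max 0 (x i - F x i) ≤ ∑ i, max 0 (p i - F p i) := hxmin hp
    have h2 : ∑ i, max 0 (p i - F p i) ≤ ∑ _i : Fin N, η / N := by
      apply Finset.sum_le_sum
      intro i _
      apply max_le (by positivity)
      linarith [hp2 i]
    have h3 : ∑ _i : Fin N, η / N = η := by
      rw [Finset.sum_const, Finset.card_univ, Fintype.card_fin, nsmul_eq_mul]
      field_simp
    linarith
  have hle2 : ∀ i, x i ≤ F x i := by
    intro i
    have h1 : max 0 (x i - F x i) ≤ ∑ i, max 0 (x i - F x i) :=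
      Finset.single_le_sum (f := fun i => max 0 (x i - F x i))
        (fun j _ => le_max_left _ _) (Finset.mem_univ i)
    have h2 := le_max_right 0 (x i - F x i)
    linarith
  refine ⟨x, hx, ?_⟩
  have hs : ∑ i, x i = ∑ i, F x i := by rw [hx.2, (hmaps x hx).2]
  funext i
  exact ((Finset.sum_eq_sum_iff_of_le fun i _ => hle2 i).1 hs i (Finset.mem_univ i)).symm

end Scarf

lemma weight_growth (g g' : ℝ → ℝ) (Lm δ : ℝ) (hg : IsAdmissible g g')
    (hL : IsLeast (ratioSet g g') Lm) (hδ : δ ≤ Lm) (a b : ℝ) (ha : 0 ≤ a)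
    (hab : a ≤ b) (hb : b ≤ 1) : g a * (1 + δ * (b - a)) ≤ g b := by
  obtain ⟨hd, -, -, hpos, -⟩ := hg
  have hmono : MonotoneOn (fun x => g x * Real.exp (-(δ * x))) (Set.Icc (0:ℝ) 1) := by
    apply monotoneOn_of_hasDerivWithinAt_nonneg (convex_Icc 0 1)
      (f' := fun x => g' x * Real.exp (-(δ * x)) + g x * (Real.exp (-(δ * x)) * (-(δ * 1))))
    · apply ContinuousOn.mul
      · exact fun x hx => (hd x hx).continuousWithinAt
      · fun_prop
    · intro x hx
      have hx' := interior_subset hx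
      apply ((hd x hx').mono interior_subset).mul
      exact (((hasDerivAt_id x).const_mul δ).neg.exp).hasDerivWithinAt
    · intro x hx
      have hx' := interior_subset hx
      have h1 : Lm ≤ g' x / g x := hL.2 ⟨x, hx', rfl⟩
      have h2 : δ * g x ≤ g' x := by
        rw [← le_div_iff₀ (hpos x hx')]; linarith
      have h3 := Real.exp_pos (-(δ * x))
      nlinarith
  have h := hmono ⟨ha, hab.trans hb⟩ ⟨ha.trans hab, hb⟩ hab
  simp only at h
  have hga := hpos a ⟨ha, hab.trans hb⟩
  have h2 : g a * Real.exp (δ * (b - a)) ≤ g b := by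
    have h3 := mul_le_mul_of_nonneg_right h (Real.exp_pos (δ * b)).le
    rw [mul_assoc, mul_assoc, ← Real.exp_add, ← Real.exp_add] at h3
    rw [show -(δ * b) + δ * b = 0 by ring, Real.exp_zero, mul_one] at h3
    rwa [show δ * (b - a) = -(δ * a) + δ * b by ring]
  have h4 := Real.add_one_le_exp (δ * (b - a))
  refine le_trans ?_ h2
  gcongr
  linarith

lemma simplex_mem_Icc {n : ℕ} {x : Fin n → ℝ} (hx : x ∈ stdSimplex ℝ (Fin n)) (i : Fin n) :
    x i ∈ Set.Icc (0:ℝ) 1 := by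
  refine ⟨hx.1 i, ?_⟩
  rw [← hx.2]
  exact Finset.single_le_sum (fun j _ => hx.1 j) (Finset.mem_univ i)

lemma sum_C_pos {n : ℕ} (C : Matrix (Fin n) (Fin n) ℝ) (hC : ∀ i j, 0 ≤ C i j)
    (hC' : ∀ i, ∃ j, 0 < C i j) (g : ℝ → ℝ) (hg : ∀ x ∈ Set.Icc (0:ℝ) 1, 0 < g x)
    {x : Fin n → ℝ} (hx : x ∈ stdSimplex ℝ (Fin n)) (i : Fin n) :
    0 < ∑ k, C i k * g (x k) := by
  obtain ⟨j, hj⟩ := hC' i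
  exact Finset.sum_pos' (fun k _ => mul_nonneg (hC i k) (hg _ (simplex_mem_Icc hx k)).le)
    ⟨j, Finset.mem_univ j, mul_pos hj (hg _ (simplex_mem_Icc hx j))⟩

lemma sum_d_pos {n : ℕ} (d : Fin (n+1) → ℝ) (hd : ∀ i, 0 < d i)
    (g : ℝ → ℝ) (hg : ∀ x ∈ Set.Icc (0:ℝ) 1, 0 < g x)
    {x : Fin (n+1) → ℝ} (hx : x ∈ stdSimplex ℝ (Fin (n+1))) :
    0 < ∑ k, d k * g (x k) :=
  Finset.sum_pos (fun k _ => mul_pos (hd k) (hg _ (simplex_mem_Icc hx k))) ⟨0, Finset.mem_univ _⟩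

lemma fd_continuousOn {n : ℕ} (C : Matrix (Fin (n+1)) (Fin (n+1)) ℝ) (hC : ∀ i j, 0 ≤ C i j)
    (hC' : ∀ i, ∃ j, 0 < C i j) (d : Fin (n+1) → ℝ) (hd : ∀ i, 0 < d i) (γ : ℝ)
    (g₁ g₂ : ℝ → ℝ) (h1 : ∀ x ∈ Set.Icc (0:ℝ) 1, 0 < g₁ x)
    (h2 : ∀ x ∈ Set.Icc (0:ℝ) 1, 0 < g₂ x) (c1 : ContinuousOn g₁ (Set.Icc 0 1))
    (c2 : ContinuousOn g₂ (Set.Icc 0 1)) :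
    ContinuousOn (fd C d γ g₁ g₂) (stdSimplex ℝ (Fin (n+1))) := by
  have hx : ∀ j, ContinuousOn (fun x : Fin (n+1) → ℝ => x j) (stdSimplex ℝ (Fin (n+1))) :=
    fun j => (continuous_apply j).continuousOn
  have e1 : ∀ j, ContinuousOn (fun x : Fin (n+1) → ℝ => g₁ (x j)) (stdSimplex ℝ (Fin (n+1))) :=
    fun j => c1.comp (hx j) fun x hx => simplex_mem_Icc hx j
  have e2 : ∀ j, ContinuousOn (fun x : Fin (n+1) → ℝ => g₂ (x j)) (stdSimplex ℝ (Fin (n+1))) :=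
    fun j => c2.comp (hx j) fun x hx => simplex_mem_Icc hx j
  rw [continuousOn_pi]
  intro j
  simp only [fd, Matrix.vecMul, dotProduct, Md, Matrix.of_apply]
  apply continuousOn_finsetSum
  intro i _
  apply (hx i).mul
  apply ContinuousOn.add
  · apply continuousOn_const.mul
    apply ContinuousOn.div
    · exact continuousOn_const.mul (e1 j)
    · exact continuousOn_finsetSum _ fun k _ => continuousOn_const.mul (e1 k)
    · exact fun x hx => (sum_C_pos C hC hC' g₁ h1 hx i).ne'
  · apply continuousOn_const.mul
    apply ContinuousOn.div
    · exact continuousOn_const.mul (e2 j)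
    · exact continuousOn_finsetSum _ fun k _ => continuousOn_const.mul (e2 k)
    · exact fun x hx => (sum_d_pos d hd g₂ h2 hx).ne'

lemma fd_mem {n : ℕ} (C : Matrix (Fin (n+1)) (Fin (n+1)) ℝ) (hC : ∀ i j, 0 ≤ C i j)
    (hC' : ∀ i, ∃ j, 0 < C i j) (d : Fin (n+1) → ℝ) (hd : ∀ i, 0 < d i) (γ : ℝ)
    (hγ0 : 0 < γ) (hγ1 : γ < 1)
    (g₁ g₂ : ℝ → ℝ) (h1 : ∀ x ∈ Set.Icc (0:ℝ) 1, 0 < g₁ x)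
    (h2 : ∀ x ∈ Set.Icc (0:ℝ) 1, 0 < g₂ x) (x : Fin (n+1) → ℝ)
    (hx : x ∈ stdSimplex ℝ (Fin (n+1))) :
    fd C d γ g₁ g₂ x ∈ stdSimplex ℝ (Fin (n+1)) ∧
      (1 - γ) * (d 0 * g₂ (x 0) / ∑ k, d k * g₂ (x k)) ≤ fd C d γ g₁ g₂ x 0 := by
  have hsC := fun i => sum_C_pos C hC hC' g₁ h1 hx i
  have hsd := sum_d_pos d hd g₂ h2 hx
  have hA : ∀ i j, 0 ≤ γ * (C i j * g₁ (x j) / ∑ k, C i k * g₁ (x k)) := fun i j =>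
    mul_nonneg hγ0.le (div_nonneg (mul_nonneg (hC i j) (h1 _ (simplex_mem_Icc hx j)).le)
      (hsC i).le)
  have hB : ∀ j, 0 ≤ (1 - γ) * (d j * g₂ (x j) / ∑ k, d k * g₂ (x k)) := fun j =>
    mul_nonneg (by linarith) (div_nonneg (mul_nonneg (hd j).le (h2 _ (simplex_mem_Icc hx j)).le)
      hsd.le)
  refine ⟨⟨?_, ?_⟩, ?_⟩
  · intro j
    simp only [fd, Matrix.vecMul, dotProduct, Md, Matrix.of_apply]
    exact Finset.sum_nonneg fun i _ => mul_nonneg (hx.1 i) (add_nonneg (hA i j) (hB j))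
  · simp only [fd, Matrix.vecMul, dotProduct, Md, Matrix.of_apply]
    rw [Finset.sum_comm]
    refine Eq.trans (Finset.sum_congr rfl ?_) hx.2
    intro i _
    rw [← Finset.mul_sum, Finset.sum_add_distrib, ← Finset.mul_sum, ← Finset.mul_sum,
      ← Finset.sum_div, ← Finset.sum_div, div_self (hsC i).ne', div_self hsd.ne']
    ring
  · simp only [fd, Matrix.vecMul, dotProduct, Md, Matrix.of_apply]
    calc (1 - γ) * (d 0 * g₂ (x 0) / ∑ k, d k * g₂ (x k))
        = ∑ i, x i * ((1 - γ) * (d 0 * g₂ (x 0) / ∑ k, d k * g₂ (x k))) := by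
          rw [← Finset.sum_mul, hx.2, one_mul]
      _ ≤ _ := Finset.sum_le_sum fun i _ =>
          mul_le_mul_of_nonneg_left (by linarith [hA i 0]) (hx.1 i)

/-- In the damped model, with `μ = (Σ_{k≠1} d_k)/d₁` and `0 < γ < ε < 1/2`, for
`L⁻(g₂)` large enough (depending only on `μ`, `ε` and `γ`), the map `f` has a fixed
point in `Σ_ε = {x ∈ Σ : x₁ ≥ 1 − ε}`, whatever the weight function `g₁`. -/
theorem damped_fixed_point_near_vertex_small_T2
    (μ ε γ : ℝ) (hε0 : 0 < ε) (hε1 : ε < 1/2) (hγ0 : 0 < γ) (hγε : γ < ε) :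
    ∃ δ : ℝ, 0 < δ ∧
      ∀ n : ℕ, ∀ C : Matrix (Fin (n+1)) (Fin (n+1)) ℝ,
        (∀ i j, 0 ≤ C i j) → (∀ i, ∃ j, 0 < C i j) →
        ∀ d : Fin (n+1) → ℝ, (∀ i, 0 < d i) →
        (∑ k ∈ Finset.univ.erase 0, d k) / d 0 = μ →
        ∀ g₂ g₂' : ℝ → ℝ, ∀ Lm₂ : ℝ, IsAdmissible g₂ g₂' →
          IsLeast (ratioSet g₂ g₂') Lm₂ → δ ≤ Lm₂ →
          ∀ g₁ g₁' : ℝ → ℝ, IsWeight g₁ g₁' →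
            ∃ x ∈ stdSimplex ℝ (Fin (n+1)), 1 - ε ≤ x 0 ∧ fd C d γ g₁ g₂ x = x := by
  have hε2 : 0 < 1 - 2 * ε := by linarith
  have hεγ : 0 < ε - γ := by linarith
  have hδ0 : 0 < (1 + |μ|) / ((ε - γ) * (1 - 2 * ε)) := by positivity
  refine ⟨(1 + |μ|) / ((ε - γ) * (1 - 2 * ε)), hδ0, ?_⟩
  generalize hδdef : (1 + |μ|) / ((ε - γ) * (1 - 2 * ε)) = δ at hδ0 ⊢
  have hδm : |μ| ≤ (ε - γ) * (1 + δ * (1 - 2 * ε)) := by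
    have : δ * ((ε - γ) * (1 - 2 * ε)) = 1 + |μ| := by
      rw [← hδdef]; exact div_mul_cancel₀ _ (by positivity)
    nlinarith
  intro n C hC hC' d hd hμ g₂ g₂' Lm hg₂ hL hδL g₁ g₁' hg₁
  have c1 : ContinuousOn g₁ (Set.Icc 0 1) := fun x hx => (hg₁.1 x hx).continuousWithinAt
  have c2 : ContinuousOn g₂ (Set.Icc 0 1) := fun x hx => (hg₂.1 x hx).continuousWithinAt
  have p1 := hg₁.2.2.2.1
  have p2 := hg₂.2.2.2.1
  have hfc := fd_continuousOn C hC hC' d hd γ g₁ g₂ p1 p2 c1 c2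
  have hfm := fd_mem C hC hC' d hd γ hγ0 (by linarith) g₁ g₂ p1 p2
  -- invariance of the truncated simplex
  have hinv : ∀ x ∈ stdSimplex ℝ (Fin (n+1)), 1 - ε ≤ x 0 → 1 - ε ≤ fd C d γ g₁ g₂ x 0 := by
    intro x hx hx0
    refine le_trans ?_ (hfm x hx).2
    have hsd := sum_d_pos d hd g₂ p2 hx
    rw [← mul_div_assoc, le_div_iff₀ hsd, ← Finset.add_sum_erase _ _ (Finset.mem_univ 0)]
    have hg0 := p2 _ (simplex_mem_Icc hx 0)
    have hs : 0 < 1 + δ * (1 - 2 * ε) := by positivity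
    have hk : ∀ k ∈ Finset.univ.erase (0 : Fin (n+1)),
        d k * g₂ (x k) ≤ d k * (g₂ (x 0) / (1 + δ * (1 - 2 * ε))) := by
      intro k hk
      have hk0 := Finset.ne_of_mem_erase hk
      apply mul_le_mul_of_nonneg_left _ (hd k).le
      rw [le_div_iff₀ hs]
      have hxk : x k ≤ ε := by
        have h1 := hx.2
        rw [← Finset.add_sum_erase _ _ (Finset.mem_univ (0 : Fin (n+1)))] at h1
        have h2 := Finset.single_le_sum (f := x) (fun j _ => hx.1 j) hk
        linarith
      have hgk := p2 _ (simplex_mem_Icc hx k)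
      refine le_trans ?_ (weight_growth g₂ g₂' Lm δ hg₂ hL hδL (x k) (x 0) (hx.1 k)
        (by linarith) (simplex_mem_Icc hx 0).2)
      have h5 : δ * (1 - 2 * ε) ≤ δ * (x 0 - x k) :=
        mul_le_mul_of_nonneg_left (by linarith) hδ0.le
      exact mul_le_mul_of_nonneg_left (by linarith) hgk.le
    have hsum := Finset.sum_le_sum hk
    rw [← Finset.sum_mul, (div_eq_iff (hd 0).ne').1 hμ] at hsum
    have hb : μ * d 0 * (g₂ (x 0) / (1 + δ * (1 - 2 * ε))) ≤ (ε - γ) * (d 0 * g₂ (x 0)) := by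
      rw [← mul_div_assoc, div_le_iff₀ hs]
      have h1 := (le_abs_self μ).trans hδm
      have h2 : 0 < d 0 * g₂ (x 0) := mul_pos (hd 0) hg0
      nlinarith [mul_le_mul_of_nonneg_right h1 h2.le]
    have h2 : 0 < d 0 * g₂ (x 0) := mul_pos (hd 0) hg0
    have h3 := hsum.trans hb
    have h4 : 0 ≤ ∑ k ∈ Finset.univ.erase (0 : Fin (n+1)), d k * g₂ (x k) :=
      Finset.sum_nonneg fun k _ => mul_nonneg (hd k).le (p2 _ (simplex_mem_Icc hx k)).le
    nlinarith
  let e : Fin (n+1) → ℝ := Pi.single 0 1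
  have he : e ∈ stdSimplex ℝ (Fin (n+1)) := single_mem_stdSimplex ℝ 0
  have he0 : e 0 = 1 := by simp [e]
  let φ : (Fin (n+1) → ℝ) → (Fin (n+1) → ℝ) := fun y => ε • y + (1 - ε) • e
  have hφ : ∀ y ∈ stdSimplex ℝ (Fin (n+1)), φ y ∈ stdSimplex ℝ (Fin (n+1)) := fun y hy =>
    convex_stdSimplex ℝ _ hy he hε0.le (by linarith) (by ring)
  have hφ0 : ∀ y ∈ stdSimplex ℝ (Fin (n+1)), 1 - ε ≤ φ y 0 := by
    intro y hy
    simp only [φ, Pi.add_apply, Pi.smul_apply, smul_eq_mul, he0]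
    nlinarith [hy.1 0]
  have hφc : Continuous φ := by fun_prop
  obtain ⟨y, hy, hfix⟩ := Scarf.brouwer_simplex (n+1) (Nat.succ_pos n)
    (fun y => ε⁻¹ • (fd C d γ g₁ g₂ (φ y) - (1 - ε) • e))
    (by
      exact ((hfc.comp hφc.continuousOn hφ).sub continuousOn_const).const_smul ε⁻¹)
    (by
      intro y hy
      have hm := (hfm _ (hφ y hy)).1
      refine ⟨fun i => ?_, ?_⟩
      · simp only [Pi.smul_apply, Pi.sub_apply, smul_eq_mul]
        apply mul_nonneg (by positivity)
        by_cases hi : i = 0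
        · subst hi
          rw [he0]
          linarith [hinv _ (hφ y hy) (hφ0 y hy)]
        · have : e i = 0 := by simp [e, hi]
          rw [this]
          linarith [hm.1 i]
      · simp only [Pi.smul_apply, Pi.sub_apply, smul_eq_mul]
        rw [← Finset.mul_sum, Finset.sum_sub_distrib, ← Finset.mul_sum, hm.2, he.2]
        field_simp
        ring)
  refine ⟨φ y, hφ y hy, hφ0 y hy, ?_⟩
  have h1 : fd C d γ g₁ g₂ (φ y) - (1 - ε) • e = ε • y := by
    rw [← hfix, smul_smul, mul_inv_cancel₀ hε0.ne', one_smul, hfix]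
  rw [sub_eq_iff_eq_add.1 h1]
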